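/- Let T be an exponentially growing rank-one transformation with a bounded number of cuts. Then T is weakly rationally ergodic; in fact, for F = I the unit interval and all measurable A, B ⊆ I, one has (1/a_n(I)) ∑_{k=0}^{n−1} μ(A ∩ T^k B) → μ(A)μ(B) as n → ∞. -/

import Mathlib

open MeasureTheory Filter Set Pointwise

/-- A rank-one cutting-and-stacking transformation of a subset `X ⊆ ℝ` (with Lebesgue
measure), given by columns `C n` consisting of `h n` levels (open intervals) of width `w n`,
with `pos n j` the left endpoint of the level of height `j` in column `C n`; column `C (n+1)`
is obtained from `C n` by cutting into `r n ≥ 2` subcolumns of equal width, adding `s n k`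
spacers above the `k`-th subcolumn, and stacking. -/
structure RankOne where
  X : Set ℝ
  T : ℝ ≃ᵐ ℝ
  r : ℕ → ℕ
  s : ℕ → ℕ → ℕ
  h : ℕ → ℕ
  w : ℕ → ℝ
  pos : ℕ → ℕ → ℝ
  hr : ∀ n, 2 ≤ r n
  h0 : h 0 = 1
  w0 : w 0 = 1
  pos0 : pos 0 0 = 0
  hrec : ∀ n, h (n + 1) = ∑ k ∈ Finset.range (r n), (h n + s n k)
  wrec : ∀ n, w (n + 1) = w n / (r n : ℝ)
  hX : X = ⋃ n, ⋃ j < h n, Set.Ioo (pos n j) (pos n j + w n)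
  disj : ∀ n, ∀ j < h n, ∀ j' < h n, j ≠ j' →
    Disjoint (Set.Ioo (pos n j) (pos n j + w n)) (Set.Ioo (pos n j') (pos n j' + w n))
  stack : ∀ n, ∀ j < h n, ∀ k < r n,
    pos (n + 1) ((∑ i ∈ Finset.range k, (h n + s n i)) + j) = pos n j + (k : ℝ) * w (n + 1)
  Tmap : ∀ n j, j + 1 < h n → ∀ x ∈ Set.Ioo (pos n j) (pos n j + w n),
    T x = x + (pos n (j + 1) - pos n j)
  Tbij : Set.BijOn (⇑T) X X
  Tpres : MeasurePreserving (⇑T) (volume.restrict X) (volume.restrict X)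

namespace RankOne

/-- The level of height `j` in column `C n`. -/
def lvl (S : RankOne) (n j : ℕ) : Set ℝ := Set.Ioo (S.pos n j) (S.pos n j + S.w n)

/-- The measure on the space: Lebesgue measure restricted to `X`. -/
noncomputable def μ (S : RankOne) : Measure ℝ := volume.restrict S.X

/-- The intrinsic weight sequence `u n F = μ(F ∩ TⁿF) / μ(F)²`. -/
noncomputable def u (S : RankOne) (F : Set ℝ) (n : ℕ) : ℝ :=
  (S.μ (F ∩ (⇑S.T)^[n] '' F)).toReal / (S.μ F).toReal ^ 2

/-- `a n F = ∑_{k<n} u k F`. -/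
noncomputable def a (S : RankOne) (F : Set ℝ) (n : ℕ) : ℝ :=
  ∑ k ∈ Finset.range n, S.u F k

/-- `T` is normal if spacers are added above the rightmost subcolumn infinitely often. -/
def Normal (S : RankOne) : Prop := ∀ m, ∃ n, m ≤ n ∧ 0 < S.s n (S.r n - 1)

/-- `T` grows exponentially: `2 s_{n, r_n - 1} ≥ h_{n+1}` for every `n`. -/
def ExpGrowing (S : RankOne) : Prop := ∀ n, S.h (n + 1) ≤ 2 * S.s n (S.r n - 1)

/-- `T` has a bounded number of cuts: `sup r_n < ∞`. -/
def BoundedCuts (S : RankOne) : Prop := ∃ c, ∀ n, S.r n ≤ c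

/-- `H n = {0} ∪ {∑_{k≤i} (h n + s n k) : 0 ≤ i < r n - 1}`. -/
def Hset (S : RankOne) (n : ℕ) : Finset ℕ :=
  insert 0 ((Finset.range (S.r n - 1)).image fun i => ∑ k ∈ Finset.range (i + 1), (S.h n + S.s n k))

/-- The set of heights in column `C N` of the descendants of the level of height `p`
in column `C j`: `D(J, N) = p + H j ⊕ H (j+1) ⊕ ⋯ ⊕ H (N-1)`. -/
def desc (S : RankOne) (j p : ℕ) : ℕ → Finset ℕ
  | 0 => {p}
  | N + 1 => if N < j then {p} else desc S j p N + S.Hset N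

/-- `M m`: the maximal height of a descendant of the unit interval `I` in column `C m`. -/
def M (S : RankOne) (m : ℕ) : ℕ := (S.desc 0 0 m).sup id

/-- The ergodic sum `S_n(1_F)(x) = ∑_{k<n} 1_F(T^k x)`. -/
noncomputable def birkhoff (S : RankOne) (F : Set ℝ) (n : ℕ) (x : ℝ) : ℝ :=
  ∑ k ∈ Finset.range n, Set.indicator F (fun _ => (1 : ℝ)) ((⇑S.T)^[k] x)

/-- `T` is rationally weakly mixing on `F`. -/
def RWMOn (S : RankOne) (F : Set ℝ) : Prop :=
  MeasurableSet F ∧ 0 < S.μ F ∧ S.μ F ≠ ⊤ ∧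
  ∀ A B : Set ℝ, MeasurableSet A → A ⊆ F → MeasurableSet B → B ⊆ F →
    Tendsto (fun n => (S.a F n)⁻¹ *
      ∑ k ∈ Finset.range n,
        |(S.μ (A ∩ (⇑S.T)^[k] '' B)).toReal - (S.μ A).toReal * (S.μ B).toReal * S.u F k|)
      atTop (nhds 0)

/-- `T` is rationally weakly mixing. -/
def RWM (S : RankOne) : Prop := ∃ F, S.RWMOn F

/-- `T` is rationally ergodic: some set `F` of positive finite measure satisfies a
Renyi inequality. -/
def RatErgodic (S : RankOne) : Prop :=
  ∃ (F : Set ℝ) (c : ℝ), MeasurableSet F ∧ 0 < S.μ F ∧ S.μ F ≠ ⊤ ∧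
    ∀ n, ∫ x in F, (S.birkhoff F n x) ^ 2 ∂S.μ ≤ c * (∫ x in F, S.birkhoff F n x ∂S.μ) ^ 2

/-- `T` is spectrally weakly mixing: every bounded measurable eigenfunction is a.e. constant. -/
def SpecWM (S : RankOne) : Prop :=
  ∀ (f : ℝ → ℂ) (z : ℂ), Measurable f → (∃ C, ∀ᵐ x ∂S.μ, ‖f x‖ ≤ C) →
    (∀ᵐ x ∂S.μ, f (S.T x) = z * f x) → ∃ c : ℂ, ∀ᵐ x ∂S.μ, f x = c

/-- `T` is zero-type: `μ(A ∩ TⁿA) → 0` for all `A` of finite measure. -/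
def ZeroType (S : RankOne) : Prop :=
  ∀ A : Set ℝ, MeasurableSet A → S.μ A ≠ ⊤ →
    Tendsto (fun n => S.μ (A ∩ (⇑S.T)^[n] '' A)) atTop (nhds 0)

/-- The `i`-th nonzero element of `H n` (for `i < r n - 1`): `e n i = ∑_{k ≤ i} (h n + s n k)`. -/
def e (S : RankOne) (n i : ℕ) : ℕ := ∑ k ∈ Finset.range (i + 1), (S.h n + S.s n k)

/-- `T` is steep: listing the nonzero elements of `H 0`, then `H 1`, etc., as `t 1, t 2, …`,
each successive element is at least `4` times the previous one. -/
def Steep (S : RankOne) : Prop :=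
  (∀ n i, i + 2 < S.r n → 4 * S.e n i ≤ S.e n (i + 1)) ∧
  (∀ n, 4 * S.e n (S.r n - 2) ≤ S.e (n + 1) 0)

/-- `T` is almost steep. -/
def AlmostSteep (S : RankOne) : Prop :=
  ∀ n, 3 ≤ S.r n ∧ S.s n 0 = 0 ∧ S.s n 1 = 1 ∧
    ∀ i, 2 ≤ i → i ≤ S.r n - 1 →
      4 * (∑ k ∈ Finset.range i, (S.h n + S.s n k)) ≤ ∑ k ∈ Finset.range (i + 1), (S.h n + S.s n k)

/-- `A` is a finite union of levels of `T`. -/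
def FinUnionLevels (S : RankOne) (A : Set ℝ) : Prop :=
  ∃ q : Finset (ℕ × ℕ), (∀ v ∈ q, v.2 < S.h v.1) ∧ A = ⋃ v ∈ q, S.lvl v.1 v.2

end RankOne

/-!
Every level of the column `C N` is an iterate of its base, and replacing a set by its image under
`T` changes a return sum `∑_{k<n} μ(A ∩ T^k B)` by a bounded amount. Hence the return sums of two
unions of levels of `C N`, and of the unit interval `I`, are asymptotically proportional to
those of the base, which gives the limit for such unions. To pass to arbitrary `A, B ⊆ I` one needs
`∑_{k<n} μ(E ∩ T^k I)` and `∑_{k<n} μ(I ∩ T^k E)` to be at most `C a_n(I) μ(E)` with `C`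
independent of `n` and `E ⊆ I`. Choose `N` with `h N < 2 n ≤ h (N + 1)`. By exponential growth `I`
lies in the lower half of each column, so on the one hand each descendant of `I` in `C (N + 1)` has
disjoint images during `n` steps and the two sums are at most `μ(E)` times the number of descendants
in `C (N + 1)`; on the other hand any two descendants in `C N` are fewer than `n` levels apart, so
`2 a_n(I)` is at least the number of descendants in `C N`. The ratio of the two numbers is the
number of cuts `r N`.
-/

open scoped symmDiff

section MeasureGeneral

variable {α : Type*} [MeasurableSpace α] {μ : Measure α}

lemma abs_measureReal_sub_le_of_subset_union {s t v : Set α} (hs : μ s ≠ ⊤) (ht : μ t ≠ ⊤)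
    (hv : μ v ≠ ⊤) (hst : s ⊆ t ∪ v) (hts : t ⊆ s ∪ v) :
    |μ.real s - μ.real t| ≤ μ.real v := by
  have hs' : μ.real s ≤ μ.real t + μ.real v :=
    (measureReal_mono hst (measure_union_ne_top ht hv)).trans (measureReal_union_le _ _)
  have ht' : μ.real t ≤ μ.real s + μ.real v :=
    (measureReal_mono hts (measure_union_ne_top hs hv)).trans (measureReal_union_le _ _)
  exact abs_sub_le_iff.2 ⟨by linarith, by linarith⟩

lemma tendsto_measureReal_of_symmDiff {β : Type*} {l : Filter β} {A I : Set α} {A' : β → Set α}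
    (hI : μ I ≠ ⊤) (hA : A ⊆ I) (hA' : ∀ b, A' b ⊆ I)
    (h : Tendsto (fun b => μ.real (A ∆ A' b)) l (nhds 0)) :
    Tendsto (fun b => μ.real (A' b)) l (nhds (μ.real A)) := by
  refine tendsto_iff_dist_tendsto_zero.2 (squeeze_zero (fun _ => dist_nonneg) (fun b => ?_) h)
  have hfin : ∀ {E : Set α}, E ⊆ I → μ E ≠ ⊤ := fun hE => measure_ne_top_of_subset hE hI
  refine abs_measureReal_sub_le_of_subset_union (hfin (hA' b)) (hfin hA)
    (hfin (symmDiff_subset_union.trans (union_subset hA (hA' b)))) ?_ ?_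
  · intro x hx
    by_cases hxA : x ∈ A
    exacts [Or.inl hxA, Or.inr (Or.inr ⟨hx, hxA⟩)]
  · intro x hx
    by_cases hxA : x ∈ A' b
    exacts [Or.inl hxA, Or.inr (Or.inl ⟨hx, hxA⟩)]

lemma sum_measureReal_inter_le {ι : Type*} {s : Finset ι} {f : ι → Set α} {E : Set α}
    (hE : μ E ≠ ⊤) (hf : ∀ i ∈ s, MeasurableSet (f i)) (hd : (s : Set ι).PairwiseDisjoint f) :
    ∑ i ∈ s, μ.real (f i ∩ E) ≤ μ.real E := by
  have := isFiniteMeasure_restrict.2 hE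
  calc ∑ i ∈ s, μ.real (f i ∩ E) = ∑ i ∈ s, (μ.restrict E).real (f i) :=
        Finset.sum_congr rfl fun i hi => (measureReal_restrict_apply (hf i hi)).symm
    _ ≤ (μ.restrict E).real univ := sum_measureReal_le_measureReal_univ hf hd
    _ = μ.real E := measureReal_restrict_apply_univ E

lemma measureReal_biUnion_inter {ι : Type*} {s : Finset ι} {f : ι → Set α} {E : Set α}
    (hf : ∀ i ∈ s, MeasurableSet (f i)) (hd : (s : Set ι).PairwiseDisjoint f)
    (hfin : ∀ i ∈ s, μ (f i ∩ E) ≠ ⊤) :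
    μ.real ((⋃ i ∈ s, f i) ∩ E) = ∑ i ∈ s, μ.real (f i ∩ E) := by
  rw [← measureReal_restrict_apply (s.measurableSet_biUnion hf), measureReal_biUnion_finset hd hf
    fun i hi => by rw [Measure.restrict_apply (hf i hi)]; exact hfin i hi]
  exact Finset.sum_congr rfl fun i hi => measureReal_restrict_apply (hf i hi)

-- The cells meeting a compact `K ⊆ A` of almost full measure cover `K` and lie in a thickening
-- of `K` whose measure tends to that of `K`.
lemma eventually_exists_measure_symmDiff_biUnion_lt {X ι β : Type*} [MetricSpace X] [ProperSpace X]
    [MeasurableSpace X] [BorelSpace X] {ν : Measure X} [IsLocallyFiniteMeasure ν] {l : Filter β}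
    {D : β → Finset ι} {P : β → ι → Set X} {δ : β → ℝ} (hδ : Tendsto δ l (nhds 0))
    (hP : ∀ b, ∀ i ∈ D b, ∀ x ∈ P b i, ∀ y ∈ P b i, dist x y ≤ δ b) {A : Set X}
    (hA : MeasurableSet A) (hAfin : ν A ≠ ⊤) (hcover : ∀ b, A ≤ᵐ[ν] ⋃ i ∈ D b, P b i)
    {ε : ENNReal} (hε : ε ≠ 0) :
    ∀ᶠ b in l, ∃ s ⊆ D b, ν (A ∆ ⋃ i ∈ s, P b i) < ε := by
  classical
  have hε2 : ε / 2 ≠ 0 := (ENNReal.half_pos hε).ne'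
  obtain ⟨K, hKA, hK, hAK⟩ := hA.exists_isCompact_sdiff_lt hAfin hε2
  have hthick : ∀ᶠ b in l, ν (Metric.cthickening (δ b) K) < ν K + ε / 2 :=
    ((tendsto_measure_cthickening_of_isCompact hK).comp hδ).eventually_lt_const
      (ENNReal.lt_add_right hK.measure_ne_top hε2)
  filter_upwards [hthick] with b hb
  set s : Finset ι := {i ∈ D b | (P b i ∩ K).Nonempty}
  set U : Set X := ⋃ i ∈ s, P b i
  have hU : U ⊆ Metric.cthickening (δ b) K := iUnion₂_subset fun i hi x hx => by
    obtain ⟨hiD, y, hyP, hyK⟩ := Finset.mem_filter.1 hi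
    exact Metric.mem_cthickening_of_dist_le x y _ _ hyK (hP b i hiD x hx y hyP)
  have hKU : ν (K \ U) = 0 := by
    refine ae_le_set.1 ?_
    filter_upwards [hcover b] with x hx hxK
    obtain ⟨i, hi, hxi⟩ := mem_iUnion₂.1 (hx (hKA hxK))
    exact mem_iUnion₂.2 ⟨i, Finset.mem_filter.2 ⟨hi, x, hxi, hxK⟩, hxi⟩
  have hAU : ν (A \ U) < ε / 2 := calc
    ν (A \ U) ≤ ν ((A \ K) ∪ (K \ U)) := measure_mono fun x hx => by
          by_cases hxK : x ∈ K
          exacts [Or.inr ⟨hxK, hx.2⟩, Or.inl ⟨hx.1, hxK⟩]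
    _ ≤ ν (A \ K) + ν (K \ U) := measure_union_le _ _
    _ < ε / 2 := by rwa [hKU, add_zero]
  have hUA : ν (U \ A) ≤ ε / 2 := calc
    ν (U \ A) ≤ ν (Metric.cthickening (δ b) K \ K) := measure_mono (sdiff_subset_sdiff hU hKA)
    _ = ν (Metric.cthickening (δ b) K) - ν K :=
          measure_sdiff (Metric.self_subset_cthickening K) hK.nullMeasurableSet hK.measure_ne_top
    _ ≤ ε / 2 := tsub_le_iff_left.2 hb.le
  have hUAfin : ν (U \ A) ≠ ⊤ :=
    measure_ne_top_of_subset (sdiff_subset.trans hU) hK.cthickening.measure_ne_top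
  refine ⟨s, Finset.filter_subset _ _, ?_⟩
  calc ν (A ∆ U) ≤ ν (A \ U) + ν (U \ A) := measure_union_le _ _
    _ < ε / 2 + ε / 2 := ENNReal.add_lt_add_of_lt_of_le hUAfin hAU hUA
    _ = ε := ENNReal.add_halves ε

lemma Ioo_ae_eq_biUnion_Ioo {f : ℕ → ℝ} (hf : Monotone f) (n : ℕ) :
    Ioo (f 0) (f n) =ᵐ[volume] ⋃ i ∈ Finset.range n, Ioo (f i) (f (i + 1)) := by
  have hIoc : Ioc (f 0) (f n) = ⋃ i ∈ Finset.range n, Ioc (f i) (f (i + 1)) := by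
    rw [← hf.biUnion_Ico_Ioc_map_succ 0 n]
    simp [Order.succ_eq_add_one]
  refine Ioo_ae_eq_Ioc.trans (hIoc ▸ ?_)
  exact Filter.EventuallyEq.countable_bUnion (Finset.range n).countable_toSet fun _ _ =>
    Ioo_ae_eq_Ioc.symm

end MeasureGeneral

lemma tendsto_inv_mul_of_abs_sub_mul_le {β : Type*} {l : Filter β} {f g : β → ℝ} {L K : ℝ}
    (hf : Tendsto f l atTop) (hg : ∀ b, |g b - L * f b| ≤ K) :
    Tendsto (fun b => (f b)⁻¹ * g b) l (nhds L) := by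
  have hdiff : Tendsto (fun b => (f b)⁻¹ * (g b - L * f b)) l (nhds 0) :=
    hf.inv_tendsto_atTop.zero_mul_isBoundedUnder_le (isBoundedUnder_of ⟨K, hg⟩)
  have hsum := hdiff.add_const L
  rw [zero_add] at hsum
  refine hsum.congr' ?_
  filter_upwards [hf.eventually_ne_atTop 0] with b hb
  field_simp
  ring

lemma abs_apply_image_iterate_sub_le {α : Type*} {T : α → α} {A : Set α} {f : Set α → ℝ}
    {c : ℝ} {p : ℕ} (hf : ∀ k < p, |f (T '' (T^[k] '' A)) - f (T^[k] '' A)| ≤ c) :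
    |f (T^[p] '' A) - f A| ≤ p * c := by
  have h := dist_le_range_sum_of_dist_le (f := fun k => f (T^[k] '' A)) (d := fun _ => c) p
    fun {k} hk => by
      rw [dist_comm, Function.iterate_succ', image_comp]
      exact hf k hk
  rw [abs_sub_comm, ← Real.dist_eq]
  simpa using h

/-- The sum `∑_{k<n} μ(A ∩ T^k B)` of the overlaps of `A` with the first `n` images of `B`. -/
noncomputable def returnSum {α : Type*} [MeasurableSpace α] (μ : Measure α) (T : α → α) (n : ℕ)
    (A B : Set α) : ℝ :=
  ∑ k ∈ Finset.range n, μ.real (A ∩ T^[k] '' B)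

section ReturnSum

variable {α : Type*} [MeasurableSpace α] {μ : Measure α} {T : α → α} {n : ℕ} {A B E : Set α}

lemma measurableEmbedding_iterate (hT : MeasurableEmbedding T) (k : ℕ) :
    MeasurableEmbedding T^[k] := by
  induction k with
  | zero => exact MeasurableEmbedding.id
  | succ k ih => exact ih.comp hT

lemma measure_image_of_measurePreserving (hμ : MeasurePreserving T μ μ)
    (hT : MeasurableEmbedding T) (A : Set α) : μ (T '' A) = μ A := by
  rw [← hμ.measure_preimage_emb hT, preimage_image_eq A hT.injective]

lemma measure_image_iterate (hμ : MeasurePreserving T μ μ) (hT : MeasurableEmbedding T) (k : ℕ)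
    (A : Set α) : μ (T^[k] '' A) = μ A :=
  measure_image_of_measurePreserving (hμ.iterate k) (measurableEmbedding_iterate hT k) A

lemma measureReal_inter_image_iterate (hμ : MeasurePreserving T μ μ) (hT : MeasurableEmbedding T)
    (k : ℕ) (A B : Set α) : μ.real (A ∩ T^[k] '' B) = μ.real (T^[k] ⁻¹' A ∩ B) := by
  have hk := measurableEmbedding_iterate hT k
  rw [measureReal_def, ← (hμ.iterate k).measure_preimage_emb hk, preimage_inter,
    preimage_image_eq B hk.injective, measureReal_def]

lemma returnSum_nonneg (μ : Measure α) (T : α → α) (n : ℕ) (A B : Set α) :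
    0 ≤ returnSum μ T n A B :=
  Finset.sum_nonneg fun _ _ => measureReal_nonneg

lemma returnSum_congr_ae {A' B' : Set α} (hμ : MeasurePreserving T μ μ)
    (hT : MeasurableEmbedding T) (hA : A =ᵐ[μ] A') (hB : B =ᵐ[μ] B') :
    returnSum μ T n A B = returnSum μ T n A' B' := by
  refine Finset.sum_congr rfl fun k _ => measureReal_congr (hA.inter (ae_eq_set.2 ?_))
  have hk := (measurableEmbedding_iterate hT k).injective
  rw [← image_sdiff hk, ← image_sdiff hk, measure_image_iterate hμ hT, measure_image_iterate hμ hT]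
  exact ae_eq_set.1 hB

lemma abs_returnSum_image_left_sub_le (hμ : MeasurePreserving T μ μ) (hT : MeasurableEmbedding T)
    (hA : μ A ≠ ⊤) : |returnSum μ T n (T '' A) B - returnSum μ T n A B| ≤ μ.real A := by
  have hTA : μ (T '' A) = μ A := measure_image_of_measurePreserving hμ hT A
  have hshift : ∀ k, μ.real (T '' A ∩ T^[k + 1] '' B) = μ.real (A ∩ T^[k] '' B) := fun k => by
    rw [Function.iterate_succ', image_comp, ← image_inter hT.injective, measureReal_def,
      measure_image_of_measurePreserving hμ hT, measureReal_def]
  have htelescope : returnSum μ T n (T '' A) B - returnSum μ T n A B =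
      μ.real (T '' A ∩ B) - μ.real (T '' A ∩ T^[n] '' B) := by
    have := Finset.sum_range_succ' (fun k => μ.real (T '' A ∩ T^[k] '' B)) n
    rw [Finset.sum_range_succ] at this
    simp only [hshift, Function.iterate_zero, image_id] at this
    unfold returnSum
    linarith
  have hle : ∀ C, μ.real (T '' A ∩ C) ≤ μ.real A := fun C => by
    rw [measureReal_def, measureReal_def, ← hTA]
    exact measureReal_mono inter_subset_left (hTA ▸ hA)
  rw [htelescope]
  exact abs_sub_le_of_nonneg_of_le measureReal_nonneg (hle _) measureReal_nonneg (hle _)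

lemma abs_returnSum_image_right_sub_le (hA : μ A ≠ ⊤) :
    |returnSum μ T n A (T '' B) - returnSum μ T n A B| ≤ μ.real A := by
  have htelescope : returnSum μ T n A (T '' B) - returnSum μ T n A B =
      μ.real (A ∩ T^[n] '' B) - μ.real (A ∩ B) := by
    have := Finset.sum_range_succ' (fun k => μ.real (A ∩ T^[k] '' B)) n
    rw [Finset.sum_range_succ] at this
    simp only [Function.iterate_succ, image_comp, Function.iterate_zero, image_id] at this
    unfold returnSum
    linarith
  have hle : ∀ C, μ.real (A ∩ C) ≤ μ.real A := fun C => measureReal_mono inter_subset_left hA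
  rw [htelescope]
  exact abs_sub_le_of_nonneg_of_le measureReal_nonneg (hle _) measureReal_nonneg (hle _)

lemma abs_returnSum_image_iterate_sub_le (hμ : MeasurePreserving T μ μ)
    (hT : MeasurableEmbedding T) (hA : μ A ≠ ⊤) (p q : ℕ) :
    |returnSum μ T n (T^[p] '' A) (T^[q] '' B) - returnSum μ T n A B| ≤ (p + q) * μ.real A := by
  have hleft : |returnSum μ T n (T^[p] '' A) (T^[q] '' B) - returnSum μ T n A (T^[q] '' B)| ≤
      p * μ.real A :=
    abs_apply_image_iterate_sub_le (f := fun C => returnSum μ T n C (T^[q] '' B)) fun k _ => by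
      have hk := measure_image_iterate hμ hT k A
      have := abs_returnSum_image_left_sub_le (n := n) (B := T^[q] '' B) hμ hT (hk.trans_ne hA)
      rwa [measureReal_def, hk] at this
  have hright : |returnSum μ T n A (T^[q] '' B) - returnSum μ T n A B| ≤ q * μ.real A :=
    abs_apply_image_iterate_sub_le fun _ _ => abs_returnSum_image_right_sub_le hA
  calc _ ≤ _ := abs_sub_le _ (returnSum μ T n A (T^[q] '' B)) _
    _ ≤ p * μ.real A + q * μ.real A := add_le_add hleft hright
    _ = (p + q) * μ.real A := by ring

lemma returnSum_biUnion_left {ι : Type*} {s : Finset ι} {f : ι → Set α}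
    (hf : ∀ i ∈ s, MeasurableSet (f i)) (hd : (s : Set ι).PairwiseDisjoint f)
    (hfin : ∀ i ∈ s, μ (f i) ≠ ⊤) :
    returnSum μ T n (⋃ i ∈ s, f i) B = ∑ i ∈ s, returnSum μ T n (f i) B := by
  unfold returnSum
  rw [Finset.sum_comm]
  exact Finset.sum_congr rfl fun k _ => measureReal_biUnion_inter hf hd fun i hi =>
    measure_ne_top_of_subset inter_subset_left (hfin i hi)

lemma returnSum_biUnion_right {ι : Type*} {s : Finset ι} {f : ι → Set α}
    (hT : MeasurableEmbedding T) (hA : μ A ≠ ⊤) (hf : ∀ i ∈ s, MeasurableSet (f i))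
    (hd : (s : Set ι).PairwiseDisjoint f) :
    returnSum μ T n A (⋃ i ∈ s, f i) = ∑ i ∈ s, returnSum μ T n A (f i) := by
  unfold returnSum
  rw [Finset.sum_comm]
  refine Finset.sum_congr rfl fun k _ => ?_
  have hk := measurableEmbedding_iterate hT k
  simp only [image_iUnion₂, inter_comm A]
  exact measureReal_biUnion_inter (fun i hi => hk.measurableSet_image' (hf i hi))
    (fun i hi j hj hij => (disjoint_image_iff hk.injective).2 (hd hi hj hij))
    fun _ _ => measure_ne_top_of_subset inter_subset_right hA

lemma returnSum_le_of_pairwiseDisjoint_right (hT : MeasurableEmbedding T) (hE : μ E ≠ ⊤)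
    (hA : MeasurableSet A)
    (hd : (Finset.range n : Set ℕ).PairwiseDisjoint fun k => T^[k] '' A) :
    returnSum μ T n E A ≤ μ.real E := by
  simp only [returnSum, inter_comm E]
  exact sum_measureReal_inter_le hE
    (fun k _ => (measurableEmbedding_iterate hT k).measurableSet_image' hA) hd

lemma returnSum_le_of_pairwiseDisjoint_left (hμ : MeasurePreserving T μ μ)
    (hT : MeasurableEmbedding T) (hE : μ E ≠ ⊤) (hA : MeasurableSet A)
    (hd : (Finset.range n : Set ℕ).PairwiseDisjoint fun k => T^[k] '' A) :
    returnSum μ T n A E ≤ μ.real E := by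
  simp only [returnSum, measureReal_inter_image_iterate hμ hT]
  refine sum_measureReal_inter_le hE (fun k _ => (hμ.iterate k).measurable hA)
    fun k hk l hl hkl => disjoint_left.2 fun x hxk hxl => ?_
  have hcomm : T^[l] (T^[k] x) = T^[k] (T^[l] x) := Function.Commute.iterate_iterate_self T l k x
  exact disjoint_left.1 (hd hk hl hkl) ⟨_, hxl, hcomm.symm⟩ ⟨_, hxk, rfl⟩

lemma abs_returnSum_sub_le_symmDiff {I A' B' : Set α} (hI : μ I ≠ ⊤) (hA : A ⊆ I) (hA' : A' ⊆ I)
    (hB : B ⊆ I) (hB' : B' ⊆ I) :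
    |returnSum μ T n A B - returnSum μ T n A' B'| ≤
      returnSum μ T n (A ∆ A') I + returnSum μ T n I (B ∆ B') := by
  unfold returnSum
  rw [← Finset.sum_sub_distrib, ← Finset.sum_add_distrib]
  refine (Finset.abs_sum_le_sum_abs _ _).trans (Finset.sum_le_sum fun k _ => ?_)
  have hfin : ∀ {C C' : Set α}, C ⊆ I → μ (C ∩ C') ≠ ⊤ := fun hC =>
    measure_ne_top_of_subset (inter_subset_left.trans hC) hI
  have hAA' : A ∆ A' ⊆ I := symmDiff_subset_union.trans (union_subset hA hA')
  have hsub : ∀ {C C' D D' : Set α}, C ⊆ I → D ⊆ I →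
      C ∩ T^[k] '' D ⊆ C' ∩ T^[k] '' D' ∪ ((C ∆ C') ∩ T^[k] '' I ∪ I ∩ T^[k] '' (D ∆ D')) := by
    rintro C C' D D' hC hD _ ⟨hxC, y, hyD, rfl⟩
    by_cases hxC' : T^[k] y ∈ C'
    · by_cases hyD' : y ∈ D'
      · exact Or.inl ⟨hxC', y, hyD', rfl⟩
      · exact Or.inr (Or.inr ⟨hC hxC, y, Or.inl ⟨hyD, hyD'⟩, rfl⟩)
    · exact Or.inr (Or.inl ⟨Or.inl ⟨hxC, hxC'⟩, y, hD hyD, rfl⟩)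
  refine le_trans (abs_measureReal_sub_le_of_subset_union (hfin hA) (hfin hA')
    (measure_union_ne_top (hfin hAA') (hfin le_rfl)) (hsub hA hB) ?_) (measureReal_union_le _ _)
  rw [symmDiff_comm A, symmDiff_comm B]
  exact hsub hA' hB'

lemma dist_inv_mul_returnSum_le {I A' B' : Set α} {C : ℝ} (hI : μ I ≠ ⊤) (hC : 0 ≤ C)
    (hdom_left : ∀ E ⊆ I, returnSum μ T n E I ≤ C * returnSum μ T n I I * μ.real E)
    (hdom_right : ∀ E ⊆ I, returnSum μ T n I E ≤ C * returnSum μ T n I I * μ.real E)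
    (hA : A ⊆ I) (hA' : A' ⊆ I) (hB : B ⊆ I) (hB' : B' ⊆ I) :
    dist ((returnSum μ T n I I)⁻¹ * returnSum μ T n A B)
      ((returnSum μ T n I I)⁻¹ * returnSum μ T n A' B') ≤
        C * (μ.real (A ∆ A') + μ.real (B ∆ B')) := by
  set x := returnSum μ T n I I
  have hx : 0 ≤ x⁻¹ := inv_nonneg.2 (returnSum_nonneg μ T n I I)
  have hsub : |returnSum μ T n A B - returnSum μ T n A' B'| ≤
      C * x * μ.real (A ∆ A') + C * x * μ.real (B ∆ B') :=
    (abs_returnSum_sub_le_symmDiff hI hA hA' hB hB').trans (add_le_add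
      (hdom_left _ (symmDiff_subset_union.trans (union_subset hA hA')))
      (hdom_right _ (symmDiff_subset_union.trans (union_subset hB hB'))))
  calc _ = x⁻¹ * |returnSum μ T n A B - returnSum μ T n A' B'| := by
        rw [Real.dist_eq, ← mul_sub, abs_mul, abs_of_nonneg hx]
    _ ≤ x⁻¹ * (C * x * μ.real (A ∆ A') + C * x * μ.real (B ∆ B')) := by gcongr
    _ = x⁻¹ * x * (C * (μ.real (A ∆ A') + μ.real (B ∆ B'))) := by ring
    _ ≤ 1 * (C * (μ.real (A ∆ A') + μ.real (B ∆ B'))) := by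
        gcongr
        exact inv_mul_le_one
    _ = _ := one_mul _

theorem tendsto_inv_mul_returnSum_of_approx {I : Set α} {C : ℝ} {A' B' : ℕ → Set α}
    (hI : μ I ≠ ⊤) (hC : 0 ≤ C)
    (hdom_left : ∀ n, ∀ E ⊆ I, returnSum μ T n E I ≤ C * returnSum μ T n I I * μ.real E)
    (hdom_right : ∀ n, ∀ E ⊆ I, returnSum μ T n I E ≤ C * returnSum μ T n I I * μ.real E)
    (hA : A ⊆ I) (hB : B ⊆ I) (hA' : ∀ k, A' k ⊆ I) (hB' : ∀ k, B' k ⊆ I)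
    (hAA' : Tendsto (fun k => μ.real (A ∆ A' k)) atTop (nhds 0))
    (hBB' : Tendsto (fun k => μ.real (B ∆ B' k)) atTop (nhds 0))
    (hlim : ∀ k, Tendsto (fun n => (returnSum μ T n I I)⁻¹ * returnSum μ T n (A' k) (B' k)) atTop
      (nhds (μ.real (A' k) * μ.real (B' k)))) :
    Tendsto (fun n => (returnSum μ T n I I)⁻¹ * returnSum μ T n A B) atTop
      (nhds (μ.real A * μ.real B)) := by
  have hunif : TendstoUniformly
      (fun k n => (returnSum μ T n I I)⁻¹ * returnSum μ T n (A' k) (B' k))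
      (fun n => (returnSum μ T n I I)⁻¹ * returnSum μ T n A B) atTop := by
    refine Metric.tendstoUniformly_iff.2 fun ε hε => ?_
    have hzero := (hAA'.add hBB').const_mul C
    rw [add_zero, mul_zero] at hzero
    filter_upwards [hzero.eventually_lt_const hε] with k hk n
    exact (dist_inv_mul_returnSum_le hI hC (hdom_left n) (hdom_right n) hA (hA' k) hB
      (hB' k)).trans_lt hk
  exact (hunif.tendstoUniformlyOnFilter.mono_right le_top).tendsto_of_eventually_tendsto
    (Eventually.of_forall hlim) ((tendsto_measureReal_of_symmDiff hI hA hA' hAA').mul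
      (tendsto_measureReal_of_symmDiff hI hB hB' hBB'))

end ReturnSum

namespace RankOne

variable (S : RankOne)

/-- The height in column `C (N + 1)` of the bottom of the `k`-th subcolumn of `C N`; for
`k = r N` this is the height of `C (N + 1)`. -/
def offset (N k : ℕ) : ℕ := ∑ i ∈ Finset.range k, (S.h N + S.s N i)

/-- The heights in column `C N` of the descendants of the unit interval. -/
abbrev unitDesc (N : ℕ) : Finset ℕ := S.desc 0 0 N

lemma offset_succ (N k : ℕ) : S.offset N (k + 1) = S.offset N k + (S.h N + S.s N k) :=
  Finset.sum_range_succ _ _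

lemma offset_mono (N : ℕ) : Monotone (S.offset N) :=
  monotone_nat_of_le_succ fun k => (S.offset_succ N k).symm ▸ Nat.le_add_right _ _

lemma mem_Hset {N e : ℕ} : e ∈ S.Hset N ↔ ∃ k < S.r N, S.offset N k = e := by
  have hr := S.hr N
  simp only [Hset, Finset.mem_insert, Finset.mem_image, Finset.mem_range, offset]
  constructor
  · rintro (rfl | ⟨i, hi, rfl⟩)
    exacts [⟨0, by omega, rfl⟩, ⟨i + 1, by omega, rfl⟩]
  · rintro ⟨_ | i, hi, rfl⟩
    exacts [Or.inl rfl, Or.inr ⟨i, by omega, rfl⟩]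

lemma unitDesc_zero : S.unitDesc 0 = {0} := rfl

lemma mem_unitDesc_succ {N e : ℕ} :
    e ∈ S.unitDesc (N + 1) ↔ ∃ d ∈ S.unitDesc N, ∃ k < S.r N, S.offset N k + d = e := by
  simp only [unitDesc, desc, Nat.not_lt_zero, if_false, Finset.mem_add, mem_Hset,
    exists_exists_and_eq_and, add_comm]
  tauto

lemma h_pos (N : ℕ) : 0 < S.h N := by
  induction N with
  | zero => exact S.h0 ▸ one_pos
  | succ N ih =>
    rw [S.hrec]
    exact Finset.sum_pos (fun k _ => Nat.add_pos_left ih _)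
      (Finset.nonempty_range_iff.2 (by have := S.hr N; omega))

lemma h_strictMono : StrictMono S.h := strictMono_nat_of_lt_succ fun N => by
  have hle : S.r N * S.h N ≤ S.h (N + 1) := by
    rw [S.hrec]
    simpa using Finset.card_nsmul_le_sum (Finset.range (S.r N)) (fun k => S.h N + S.s N k) (S.h N)
      fun k _ => Nat.le_add_right _ _
  nlinarith [S.hr N, S.h_pos N]

lemma exists_h_lt_two_mul_le {n : ℕ} (hn : 0 < n) : ∃ N, S.h N < 2 * n ∧ 2 * n ≤ S.h (N + 1) :=
  S.h_strictMono.exists_between_of_tendsto_atTop S.h_strictMono.tendsto_atTop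
    (by rw [S.h0]; omega)

lemma w_pos (N : ℕ) : 0 < S.w N := by
  induction N with
  | zero => exact S.w0 ▸ one_pos
  | succ N ih =>
    have := S.hr N
    rw [S.wrec]
    positivity

lemma r_mul_w_succ (N : ℕ) : S.r N * S.w (N + 1) = S.w N := by
  have := S.hr N
  rw [S.wrec]
  field_simp

lemma tendsto_w : Tendsto S.w atTop (nhds 0) := by
  have hle : ∀ N, S.w N ≤ (1 / 2) ^ N := fun N => by
    induction N with
    | zero => simp [S.w0]
    | succ N ih =>
      have hr : (2 : ℝ) ≤ S.r N := mod_cast S.hr N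
      have := S.r_mul_w_succ N
      rw [pow_succ]
      nlinarith [S.w_pos (N + 1)]
  exact squeeze_zero (fun N => (S.w_pos N).le) hle
    (tendsto_pow_atTop_nhds_zero_of_lt_one (by norm_num) (by norm_num))

variable {S}

lemma offset_add_lt {N j k : ℕ} (hj : j < S.h N) (hk : k < S.r N) :
    S.offset N k + j < S.h (N + 1) :=
  calc S.offset N k + j < S.offset N (k + 1) := by rw [offset_succ]; omega
    _ ≤ S.offset N (S.r N) := S.offset_mono N hk
    _ = S.h (N + 1) := (S.hrec N).symm

lemma lt_h_of_mem_unitDesc {N d : ℕ} (hd : d ∈ S.unitDesc N) : d < S.h N := by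
  induction N generalizing d with
  | zero =>
    rw [unitDesc_zero, Finset.mem_singleton] at hd
    exact hd ▸ S.h_pos 0
  | succ N ih =>
    obtain ⟨j, hj, k, hk, rfl⟩ := S.mem_unitDesc_succ.1 hd
    exact offset_add_lt (ih hj) hk

-- Descendants of the unit interval lie below the last spacers, at least half of the column.
lemma ExpGrowing.two_mul_lt_h_of_mem_unitDesc (hexp : S.ExpGrowing) {N d : ℕ}
    (hd : d ∈ S.unitDesc N) : 2 * d < S.h N := by
  cases N with
  | zero =>
    rw [unitDesc_zero, Finset.mem_singleton] at hd
    subst hd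
    exact S.h_pos 0
  | succ N =>
    obtain ⟨j, hj, k, hk, rfl⟩ := S.mem_unitDesc_succ.1 hd
    have hlast : S.h (N + 1) = S.offset N (S.r N - 1) + (S.h N + S.s N (S.r N - 1)) := by
      rw [← offset_succ, Nat.sub_add_cancel (by omega)]
      exact S.hrec N
    have hk' : S.offset N k ≤ S.offset N (S.r N - 1) := S.offset_mono N (by omega)
    have hj' := lt_h_of_mem_unitDesc hj
    have := hexp N
    omega

section Levels

instance : IsLocallyFiniteMeasure S.μ :=
  inferInstanceAs (IsLocallyFiniteMeasure (volume.restrict S.X))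

lemma measurePreserving_T (S : RankOne) : MeasurePreserving S.T S.μ S.μ := S.Tpres

lemma measurableEmbedding_T (S : RankOne) : MeasurableEmbedding S.T := S.T.measurableEmbedding

variable {N d : ℕ}

lemma measurableSet_lvl : MeasurableSet (S.lvl N d) := measurableSet_Ioo

lemma measureReal_lvl (hd : d < S.h N) : S.μ.real (S.lvl N d) = S.w N := by
  have hX : S.lvl N d ⊆ S.X := S.hX ▸ fun x hx => mem_iUnion.2 ⟨N, mem_iUnion₂.2 ⟨d, hd, hx⟩⟩
  rw [measureReal_def, μ, Measure.restrict_eq_self _ hX, ← measureReal_def, lvl,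
    Real.volume_real_Ioo_of_le (by linarith [S.w_pos N])]
  ring

lemma measure_lvl_ne_top : S.μ (S.lvl N d) ≠ ⊤ :=
  measure_ne_top_of_subset Ioo_subset_Icc_self isCompact_Icc.measure_ne_top

lemma pairwiseDisjoint_lvl {s : Set ℕ} (hs : ∀ d ∈ s, d < S.h N) :
    s.PairwiseDisjoint (S.lvl N) :=
  fun d hd e he hde => S.disj N d (hs d hd) e (hs e he) hde

lemma measureReal_biUnion_lvl {s : Finset ℕ} (hs : ∀ d ∈ s, d < S.h N) :
    S.μ.real (⋃ d ∈ s, S.lvl N d) = s.card * S.w N := by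
  rw [measureReal_biUnion_finset (pairwiseDisjoint_lvl hs)
    (fun _ _ => measurableSet_lvl) (fun _ _ => measure_lvl_ne_top), Finset.sum_congr rfl
    fun d hd => measureReal_lvl (hs d hd), Finset.sum_const, nsmul_eq_mul]

lemma image_lvl (hd : d + 1 < S.h N) : S.T '' S.lvl N d = S.lvl N (d + 1) := by
  rw [lvl, image_congr (S.Tmap N d hd), image_add_const_Ioo, lvl]
  congr 1 <;> ring

lemma image_iterate_lvl {k : ℕ} (hd : d + k < S.h N) :
    S.T^[k] '' S.lvl N d = S.lvl N (d + k) := by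
  induction k with
  | zero => simp
  | succ k ih =>
    rw [Function.iterate_succ', image_comp, ih (by omega), image_lvl (by omega), add_assoc]

lemma lvl_ae_eq_biUnion_succ (hd : d < S.h N) : S.lvl N d =ᵐ[volume]
    ⋃ k ∈ Finset.range (S.r N), S.lvl (N + 1) (S.offset N k + d) := by
  have hmono : Monotone fun k : ℕ => S.pos N d + k * S.w (N + 1) := fun k l hkl => by
    have := (S.w_pos (N + 1)).le
    dsimp only
    gcongr
  have hparent : S.lvl N d =
      Ioo (S.pos N d + (0 : ℕ) * S.w (N + 1)) (S.pos N d + S.r N * S.w (N + 1)) := by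
    simp [lvl, S.r_mul_w_succ]
  have hchild : ∀ k ∈ Finset.range (S.r N), S.lvl (N + 1) (S.offset N k + d) =
      Ioo (S.pos N d + k * S.w (N + 1)) (S.pos N d + (k + 1 : ℕ) * S.w (N + 1)) := fun k hk => by
    rw [lvl, offset, S.stack N d hd k (Finset.mem_range.1 hk)]
    push_cast
    congr 1
    ring
  rw [hparent, iUnion₂_congr hchild]
  exact Ioo_ae_eq_biUnion_Ioo hmono (S.r N)

lemma biUnion_unitDesc_succ (S : RankOne) (f : ℕ → Set ℝ) : ⋃ e ∈ S.unitDesc (N + 1), f e =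
    ⋃ d ∈ S.unitDesc N, ⋃ k ∈ Finset.range (S.r N), f (S.offset N k + d) := by
  ext x
  simp only [mem_iUnion, exists_prop, mem_unitDesc_succ, Finset.mem_range]
  grind

lemma lvl_zero_ae_eq_biUnion_unitDesc (S : RankOne) (N : ℕ) :
    S.lvl 0 0 =ᵐ[S.μ] ⋃ d ∈ S.unitDesc N, S.lvl N d := by
  have hvol : S.lvl 0 0 =ᵐ[volume] ⋃ d ∈ S.unitDesc N, S.lvl N d := by
    induction N with
    | zero => exact (Finset.set_biUnion_singleton 0 (S.lvl 0)).symm.eventuallyEq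
    | succ N ih =>
      refine ih.trans ?_
      rw [S.biUnion_unitDesc_succ]
      exact Filter.EventuallyEq.countable_bUnion (S.unitDesc N).countable_toSet fun d hd =>
        lvl_ae_eq_biUnion_succ (lt_h_of_mem_unitDesc hd)
  exact ae_restrict_of_ae hvol

lemma lvl_subset_lvl_zero (hd : d ∈ S.unitDesc N) : S.lvl N d ⊆ S.lvl 0 0 := by
  induction N generalizing d with
  | zero =>
    rw [unitDesc_zero, Finset.mem_singleton] at hd
    rw [hd]
  | succ N ih =>
    obtain ⟨j, hj, k, hk, rfl⟩ := S.mem_unitDesc_succ.1 hd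
    refine Subset.trans ?_ (ih hj)
    have hw := S.w_pos (N + 1)
    have hr : ((k + 1 : ℕ) : ℝ) * S.w (N + 1) ≤ S.r N * S.w (N + 1) := by gcongr; exact hk
    rw [r_mul_w_succ] at hr
    push_cast at hr
    rw [lvl, lvl, offset, S.stack N j (lt_h_of_mem_unitDesc hj) k hk]
    exact Ioo_subset_Ioo (by nlinarith) (by linarith)

lemma measureReal_lvl_zero (S : RankOne) : S.μ.real (S.lvl 0 0) = 1 := by
  rw [measureReal_lvl (S.h_pos 0), S.w0]

lemma card_unitDesc_mul_w (S : RankOne) (N : ℕ) : (S.unitDesc N).card * S.w N = 1 := by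
  rw [← measureReal_biUnion_lvl fun _ => lt_h_of_mem_unitDesc,
    ← measureReal_congr (S.lvl_zero_ae_eq_biUnion_unitDesc N), S.measureReal_lvl_zero]

lemma card_unitDesc_succ (S : RankOne) (N : ℕ) :
    ((S.unitDesc (N + 1)).card : ℝ) = S.r N * (S.unitDesc N).card := by
  refine mul_right_cancel₀ (S.w_pos (N + 1)).ne' ?_
  calc _ = S.w N * (S.unitDesc N).card := by
        rw [S.card_unitDesc_mul_w, mul_comm, S.card_unitDesc_mul_w]
    _ = _ := by rw [← S.r_mul_w_succ N]; ring

end Levels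

section ReturnSums

variable {N n : ℕ}

lemma returnSum_biUnion_lvl {s t : Finset ℕ} (hs : ∀ d ∈ s, d < S.h N) (ht : ∀ e ∈ t, e < S.h N) :
    returnSum S.μ S.T n (⋃ d ∈ s, S.lvl N d) (⋃ e ∈ t, S.lvl N e) =
      ∑ d ∈ s, ∑ e ∈ t, returnSum S.μ S.T n (S.lvl N d) (S.lvl N e) := by
  rw [returnSum_biUnion_left (fun _ _ => measurableSet_lvl) (pairwiseDisjoint_lvl hs)
    fun _ _ => measure_lvl_ne_top]
  exact Finset.sum_congr rfl fun d _ => returnSum_biUnion_right S.measurableEmbedding_T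
    measure_lvl_ne_top (fun _ _ => measurableSet_lvl) (pairwiseDisjoint_lvl ht)

lemma returnSum_lvl_zero_eq_sum (S : RankOne) (N n : ℕ) :
    returnSum S.μ S.T n (S.lvl 0 0) (S.lvl 0 0) =
      ∑ d ∈ S.unitDesc N, ∑ e ∈ S.unitDesc N, returnSum S.μ S.T n (S.lvl N d) (S.lvl N e) := by
  have hI := S.lvl_zero_ae_eq_biUnion_unitDesc N
  rw [returnSum_congr_ae S.measurePreserving_T S.measurableEmbedding_T hI hI]
  exact returnSum_biUnion_lvl (fun _ => lt_h_of_mem_unitDesc) fun _ => lt_h_of_mem_unitDesc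

lemma pairwiseDisjoint_image_iterate_lvl {d : ℕ} (hd : d + n ≤ S.h N) :
    (Finset.range n : Set ℕ).PairwiseDisjoint fun k => S.T^[k] '' S.lvl N d := by
  intro k hk l hl hkl
  have hk' : d + k < S.h N := by have := Finset.mem_range.1 hk; omega
  have hl' : d + l < S.h N := by have := Finset.mem_range.1 hl; omega
  simp only [Function.onFun, image_iterate_lvl hk', image_iterate_lvl hl']
  exact S.disj N _ hk' _ hl' (by omega)

lemma ExpGrowing.returnSum_lvl_zero_right_le_card_mul (hexp : S.ExpGrowing) (hn : 2 * n ≤ S.h N)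
    {E : Set ℝ} (hE : S.μ E ≠ ⊤) :
    returnSum S.μ S.T n E (S.lvl 0 0) ≤ (S.unitDesc N).card * S.μ.real E := by
  rw [returnSum_congr_ae S.measurePreserving_T S.measurableEmbedding_T (EventuallyEq.refl _ E)
    (S.lvl_zero_ae_eq_biUnion_unitDesc N), returnSum_biUnion_right S.measurableEmbedding_T hE
    (fun _ _ => measurableSet_lvl) (pairwiseDisjoint_lvl fun _ => lt_h_of_mem_unitDesc),
    ← nsmul_eq_mul]
  refine Finset.sum_le_card_nsmul _ _ _ fun d hd =>
    returnSum_le_of_pairwiseDisjoint_right S.measurableEmbedding_T hE measurableSet_lvl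
      (pairwiseDisjoint_image_iterate_lvl ?_)
  have := hexp.two_mul_lt_h_of_mem_unitDesc hd
  omega

lemma ExpGrowing.returnSum_lvl_zero_left_le_card_mul (hexp : S.ExpGrowing) (hn : 2 * n ≤ S.h N)
    {E : Set ℝ} (hE : S.μ E ≠ ⊤) :
    returnSum S.μ S.T n (S.lvl 0 0) E ≤ (S.unitDesc N).card * S.μ.real E := by
  rw [returnSum_congr_ae S.measurePreserving_T S.measurableEmbedding_T
    (S.lvl_zero_ae_eq_biUnion_unitDesc N) (EventuallyEq.refl _ E), returnSum_biUnion_left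
    (fun _ _ => measurableSet_lvl) (pairwiseDisjoint_lvl fun _ => lt_h_of_mem_unitDesc)
    (fun _ _ => measure_lvl_ne_top), ← nsmul_eq_mul]
  refine Finset.sum_le_card_nsmul _ _ _ fun d hd =>
    returnSum_le_of_pairwiseDisjoint_left S.measurePreserving_T S.measurableEmbedding_T hE
      measurableSet_lvl (pairwiseDisjoint_image_iterate_lvl ?_)
  have := hexp.two_mul_lt_h_of_mem_unitDesc hd
  omega

lemma w_le_returnSum_lvl {d e : ℕ} (hed : e ≤ d) (hd : d < S.h N) (hdn : d < n) :
    S.w N ≤ returnSum S.μ S.T n (S.lvl N d) (S.lvl N e) := by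
  have himage : S.T^[d - e] '' S.lvl N e = S.lvl N d := by
    rw [image_iterate_lvl (by omega), Nat.add_sub_cancel' hed]
  calc S.w N = S.μ.real (S.lvl N d ∩ S.T^[d - e] '' S.lvl N e) := by
        rw [himage, inter_self, measureReal_lvl hd]
    _ ≤ returnSum S.μ S.T n (S.lvl N d) (S.lvl N e) :=
        Finset.single_le_sum (f := fun k => S.μ.real (S.lvl N d ∩ S.T^[k] '' S.lvl N e))
          (fun _ _ => measureReal_nonneg) (Finset.mem_range.2 (by omega))

-- One of any two descendants of the unit interval is above the other, by fewer than `n` levels.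
lemma ExpGrowing.card_unitDesc_le_two_mul_returnSum (hexp : S.ExpGrowing) (hn : S.h N ≤ 2 * n) :
    ((S.unitDesc N).card : ℝ) ≤ 2 * returnSum S.μ S.T n (S.lvl 0 0) (S.lvl 0 0) := by
  set D := S.unitDesc N
  set G : ℕ → ℕ → ℝ := fun d e => returnSum S.μ S.T n (S.lvl N d) (S.lvl N e)
  have hG : ∀ d ∈ D, ∀ e ∈ D, S.w N ≤ G d e + G e d := fun d hd e he => by
    have hd2 := hexp.two_mul_lt_h_of_mem_unitDesc hd
    have he2 := hexp.two_mul_lt_h_of_mem_unitDesc he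
    rcases le_total e d with hed | hde
    · exact (w_le_returnSum_lvl hed (lt_h_of_mem_unitDesc hd) (by omega)).trans
        (le_add_of_nonneg_right (returnSum_nonneg ..))
    · exact (w_le_returnSum_lvl hde (lt_h_of_mem_unitDesc he) (by omega)).trans
        (le_add_of_nonneg_left (returnSum_nonneg ..))
  calc (D.card : ℝ) = D.card * (D.card * S.w N) := by rw [S.card_unitDesc_mul_w, mul_one]
    _ = ∑ _ ∈ D, ∑ _ ∈ D, S.w N := by simp only [Finset.sum_const, nsmul_eq_mul]
    _ ≤ ∑ d ∈ D, ∑ e ∈ D, (G d e + G e d) :=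
        Finset.sum_le_sum fun d hd => Finset.sum_le_sum fun e he => hG d hd e he
    _ = 2 * ∑ d ∈ D, ∑ e ∈ D, G d e := by
        simp only [Finset.sum_add_distrib]
        rw [Finset.sum_comm (f := fun d e => G e d), two_mul]
    _ = _ := by rw [S.returnSum_lvl_zero_eq_sum N]

lemma ExpGrowing.card_unitDesc_succ_le_mul_returnSum (hexp : S.ExpGrowing) {c : ℕ}
    (hc : S.r N ≤ c) (hn : S.h N ≤ 2 * n) : ((S.unitDesc (N + 1)).card : ℝ) ≤
      2 * c * returnSum S.μ S.T n (S.lvl 0 0) (S.lvl 0 0) :=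
  calc _ ≤ c * ((S.unitDesc N).card : ℝ) := by
        rw [S.card_unitDesc_succ]
        gcongr
    _ ≤ c * (2 * returnSum S.μ S.T n (S.lvl 0 0) (S.lvl 0 0)) := by
        gcongr
        exact hexp.card_unitDesc_le_two_mul_returnSum hn
    _ = _ := by ring

lemma ExpGrowing.returnSum_lvl_zero_right_le_mul_returnSum (hexp : S.ExpGrowing) {c : ℕ}
    (hc : ∀ n, S.r n ≤ c) (n : ℕ) {E : Set ℝ} (hE : S.μ E ≠ ⊤) :
    returnSum S.μ S.T n E (S.lvl 0 0) ≤
      2 * c * returnSum S.μ S.T n (S.lvl 0 0) (S.lvl 0 0) * S.μ.real E := by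
  rcases n.eq_zero_or_pos with rfl | hn
  · simp [returnSum]
  obtain ⟨N, hN, hN'⟩ := S.exists_h_lt_two_mul_le hn
  exact (hexp.returnSum_lvl_zero_right_le_card_mul hN' hE).trans (mul_le_mul_of_nonneg_right
    (hexp.card_unitDesc_succ_le_mul_returnSum (hc N) hN.le) measureReal_nonneg)

lemma ExpGrowing.returnSum_lvl_zero_left_le_mul_returnSum (hexp : S.ExpGrowing) {c : ℕ}
    (hc : ∀ n, S.r n ≤ c) (n : ℕ) {E : Set ℝ} (hE : S.μ E ≠ ⊤) :
    returnSum S.μ S.T n (S.lvl 0 0) E ≤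
      2 * c * returnSum S.μ S.T n (S.lvl 0 0) (S.lvl 0 0) * S.μ.real E := by
  rcases n.eq_zero_or_pos with rfl | hn
  · simp [returnSum]
  obtain ⟨N, hN, hN'⟩ := S.exists_h_lt_two_mul_le hn
  exact (hexp.returnSum_lvl_zero_left_le_card_mul hN' hE).trans (mul_le_mul_of_nonneg_right
    (hexp.card_unitDesc_succ_le_mul_returnSum (hc N) hN.le) measureReal_nonneg)

lemma tendsto_card_unitDesc (S : RankOne) :
    Tendsto (fun N => ((S.unitDesc N).card : ℝ)) atTop atTop := by
  have hinv : ∀ N, ((S.unitDesc N).card : ℝ) = (S.w N)⁻¹ := fun N =>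
    eq_inv_of_mul_eq_one_left (S.card_unitDesc_mul_w N)
  simp only [hinv]
  exact (tendsto_nhdsWithin_iff.2
    ⟨S.tendsto_w, Eventually.of_forall S.w_pos⟩).inv_tendsto_nhdsGT_zero

lemma ExpGrowing.tendsto_returnSum_lvl_zero (hexp : S.ExpGrowing) :
    Tendsto (fun n => returnSum S.μ S.T n (S.lvl 0 0) (S.lvl 0 0)) atTop atTop := by
  refine tendsto_atTop.2 fun b => ?_
  obtain ⟨N, hN⟩ := (S.tendsto_card_unitDesc.eventually_ge_atTop (2 * b)).exists
  filter_upwards [eventually_ge_atTop (S.h N)] with n hn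
  have := hexp.card_unitDesc_le_two_mul_returnSum (show S.h N ≤ 2 * n by omega)
  linarith

lemma abs_returnSum_lvl_sub_le {d e : ℕ} (hd : d < S.h N) (he : e < S.h N) :
    |returnSum S.μ S.T n (S.lvl N d) (S.lvl N e) - returnSum S.μ S.T n (S.lvl N 0) (S.lvl N 0)| ≤
      2 * S.h N * S.w N := by
  have himage : ∀ {j}, j < S.h N → S.lvl N j = S.T^[j] '' S.lvl N 0 := fun {j} hj => by
    rw [image_iterate_lvl (by omega), zero_add]
  rw [himage hd, himage he]
  refine (abs_returnSum_image_iterate_sub_le S.measurePreserving_T S.measurableEmbedding_T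
    measure_lvl_ne_top d e).trans ?_
  rw [measureReal_lvl (S.h_pos N)]
  have hde : (d + e : ℝ) ≤ 2 * S.h N := by norm_cast; omega
  have := S.w_pos N
  gcongr

lemma abs_sum_returnSum_lvl_sub_le {s t : Finset ℕ} (hs : ∀ d ∈ s, d < S.h N)
    (ht : ∀ e ∈ t, e < S.h N) :
    |∑ d ∈ s, ∑ e ∈ t, returnSum S.μ S.T n (S.lvl N d) (S.lvl N e) -
      s.card * t.card * returnSum S.μ S.T n (S.lvl N 0) (S.lvl N 0)| ≤
        s.card * t.card * (2 * S.h N * S.w N) := by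
  set c := returnSum S.μ S.T n (S.lvl N 0) (S.lvl N 0)
  have hconst : ∀ x : ℝ, s.card * t.card * x = ∑ _ ∈ s, ∑ _ ∈ t, x := fun x => by
    simp only [Finset.sum_const, nsmul_eq_mul]
    ring
  rw [hconst, hconst]
  simp only [← Finset.sum_sub_distrib]
  exact (Finset.abs_sum_le_sum_abs _ _).trans (Finset.sum_le_sum fun d hd =>
    (Finset.abs_sum_le_sum_abs _ _).trans (Finset.sum_le_sum fun e he =>
      abs_returnSum_lvl_sub_le (hs d hd) (ht e he)))

-- Both return sums are, up to a bounded error, multiples of that of the base of the column.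
lemma abs_returnSum_biUnion_lvl_sub_le {s t : Finset ℕ} (hs : ∀ d ∈ s, d < S.h N)
    (ht : ∀ e ∈ t, e < S.h N) :
    |returnSum S.μ S.T n (⋃ d ∈ s, S.lvl N d) (⋃ e ∈ t, S.lvl N e) -
      S.μ.real (⋃ d ∈ s, S.lvl N d) * S.μ.real (⋃ e ∈ t, S.lvl N e) *
        returnSum S.μ S.T n (S.lvl 0 0) (S.lvl 0 0)| ≤
      2 * (s.card * t.card * (2 * S.h N * S.w N)) := by
  have hI : ∀ d ∈ S.unitDesc N, d < S.h N := fun _ => lt_h_of_mem_unitDesc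
  rw [returnSum_biUnion_lvl hs ht, S.returnSum_lvl_zero_eq_sum N, measureReal_biUnion_lvl hs,
    measureReal_biUnion_lvl ht]
  have hst := abs_sum_returnSum_lvl_sub_le (n := n) hs ht
  have hII := abs_sum_returnSum_lvl_sub_le (n := n) hI hI
  have hcard := S.card_unitDesc_mul_w N
  set c := returnSum S.μ S.T n (S.lvl N 0) (S.lvl N 0)
  set R := ∑ d ∈ S.unitDesc N, ∑ e ∈ S.unitDesc N, returnSum S.μ S.T n (S.lvl N d) (S.lvl N e)
  set m : ℝ := ((S.unitDesc N).card : ℝ)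
  set a : ℝ := (s.card : ℝ) * t.card
  have hscale : |a * c - s.card * S.w N * (t.card * S.w N) * R| ≤ a * (2 * S.h N * S.w N) := calc
    _ = |a * S.w N ^ 2 * (m * m * c - R)| := by
        congr 1
        linear_combination (-a * c * (1 + m * S.w N)) * hcard
    _ = a * S.w N ^ 2 * |R - m * m * c| := by
        rw [abs_mul, abs_of_nonneg (by positivity), abs_sub_comm]
    _ ≤ a * S.w N ^ 2 * (m * m * (2 * S.h N * S.w N)) := by gcongr
    _ = a * (2 * S.h N * S.w N) := by
        linear_combination (a * (2 * S.h N * S.w N) * (1 + m * S.w N)) * hcard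
  calc _ ≤ _ := abs_sub_le _ (a * c) _
    _ ≤ _ := (add_le_add hst hscale).trans_eq (two_mul _).symm

theorem ExpGrowing.tendsto_inv_mul_returnSum_biUnion_lvl (hexp : S.ExpGrowing) {s t : Finset ℕ}
    (hs : ∀ d ∈ s, d < S.h N) (ht : ∀ e ∈ t, e < S.h N) :
    Tendsto (fun n => (returnSum S.μ S.T n (S.lvl 0 0) (S.lvl 0 0))⁻¹ *
        returnSum S.μ S.T n (⋃ d ∈ s, S.lvl N d) (⋃ e ∈ t, S.lvl N e)) atTop
      (nhds (S.μ.real (⋃ d ∈ s, S.lvl N d) * S.μ.real (⋃ e ∈ t, S.lvl N e))) :=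
  tendsto_inv_mul_of_abs_sub_mul_le hexp.tendsto_returnSum_lvl_zero fun _ =>
    abs_returnSum_biUnion_lvl_sub_le hs ht

lemma a_lvl_zero (S : RankOne) (n : ℕ) :
    S.a (S.lvl 0 0) n = returnSum S.μ S.T n (S.lvl 0 0) (S.lvl 0 0) := by
  simp only [a, u, ← measureReal_def, S.measureReal_lvl_zero, one_pow, div_one, returnSum]

end ReturnSums

lemma eventually_exists_measure_symmDiff_biUnion_lvl_lt {A : Set ℝ} (hA : MeasurableSet A)
    (hAI : A ⊆ S.lvl 0 0) {ε : ENNReal} (hε : ε ≠ 0) :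
    ∀ᶠ N in atTop, ∃ s ⊆ S.unitDesc N, S.μ (A ∆ ⋃ d ∈ s, S.lvl N d) < ε := by
  refine eventually_exists_measure_symmDiff_biUnion_lt S.tendsto_w (fun N d _ x hx y hy => ?_) hA
    (measure_ne_top_of_subset hAI measure_lvl_ne_top)
    (fun N => hAI.eventuallyLE.trans (S.lvl_zero_ae_eq_biUnion_unitDesc N).le) hε
  exact abs_sub_le_iff.2 ⟨by linarith [hx.2, hy.1], by linarith [hx.1, hy.2]⟩

lemma exists_seq_tendsto_symmDiff_biUnion_lvl {A B : Set ℝ} (hA : MeasurableSet A)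
    (hAI : A ⊆ S.lvl 0 0) (hB : MeasurableSet B) (hBI : B ⊆ S.lvl 0 0) :
    ∃ (N : ℕ → ℕ) (s t : ℕ → Finset ℕ), (∀ k, s k ⊆ S.unitDesc (N k)) ∧
      (∀ k, t k ⊆ S.unitDesc (N k)) ∧
      Tendsto (fun k => S.μ.real (A ∆ ⋃ d ∈ s k, S.lvl (N k) d)) atTop (nhds 0) ∧
      Tendsto (fun k => S.μ.real (B ∆ ⋃ d ∈ t k, S.lvl (N k) d)) atTop (nhds 0) := by
  obtain ⟨ε, -, hεpos, hε⟩ := exists_seq_strictAnti_tendsto (0 : ℝ)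
  have hstage : ∀ k, ∃ (N : ℕ) (s t : Finset ℕ), s ⊆ S.unitDesc N ∧ t ⊆ S.unitDesc N ∧
      S.μ.real (A ∆ ⋃ d ∈ s, S.lvl N d) ≤ ε k ∧ S.μ.real (B ∆ ⋃ d ∈ t, S.lvl N d) ≤ ε k :=
    fun k => by
      have hεk : ENNReal.ofReal (ε k) ≠ 0 := (ENNReal.ofReal_pos.2 (hεpos k)).ne'
      obtain ⟨N, ⟨s, hs, hAs⟩, t, ht, hBt⟩ :=
        ((eventually_exists_measure_symmDiff_biUnion_lvl_lt hA hAI hεk).and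
          (eventually_exists_measure_symmDiff_biUnion_lvl_lt hB hBI hεk)).exists
      exact ⟨N, s, t, hs, ht, ENNReal.toReal_le_of_le_ofReal (hεpos k).le hAs.le,
        ENNReal.toReal_le_of_le_ofReal (hεpos k).le hBt.le⟩
  choose N s t hs ht hAs hBt using hstage
  exact ⟨N, s, t, hs, ht, squeeze_zero (fun _ => measureReal_nonneg) hAs hε,
    squeeze_zero (fun _ => measureReal_nonneg) hBt hε⟩

end RankOne

/-- An exponentially growing rank-one transformation with a bounded number of
cuts is weakly rationally ergodic; in fact, with `F = I` the unit interval, for all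
measurable `A, B ⊆ I` one has `(1/a_n(I)) ∑_{k<n} μ(A ∩ T^k B) → μ(A)μ(B)`. -/
theorem statement2 (S : RankOne) (hexp : S.ExpGrowing) (hbdd : S.BoundedCuts)
    (A B : Set ℝ) (hA : MeasurableSet A) (hAI : A ⊆ S.lvl 0 0)
    (hB : MeasurableSet B) (hBI : B ⊆ S.lvl 0 0) :
    Tendsto (fun n => (S.a (S.lvl 0 0) n)⁻¹ *
        ∑ k ∈ Finset.range n, (S.μ (A ∩ (⇑S.T)^[k] '' B)).toReal)
      atTop (nhds ((S.μ A).toReal * (S.μ B).toReal)) := by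
  obtain ⟨c, hc⟩ := hbdd
  obtain ⟨N, s, t, hs, ht, hAs, hBt⟩ :=
    RankOne.exists_seq_tendsto_symmDiff_biUnion_lvl hA hAI hB hBI
  have hfin : ∀ {E}, E ⊆ S.lvl 0 0 → S.μ E ≠ ⊤ := fun hE =>
    measure_ne_top_of_subset hE RankOne.measure_lvl_ne_top
  have hsub : ∀ {k : ℕ} {q : Finset ℕ}, q ⊆ S.unitDesc k → ⋃ d ∈ q, S.lvl k d ⊆ S.lvl 0 0 :=
    fun hq => iUnion₂_subset fun d hd => RankOne.lvl_subset_lvl_zero (hq hd)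
  simp only [RankOne.a_lvl_zero]
  exact tendsto_inv_mul_returnSum_of_approx (C := 2 * c) (hfin Subset.rfl) (by positivity)
    (fun n E hE => hexp.returnSum_lvl_zero_right_le_mul_returnSum hc n (hfin hE))
    (fun n E hE => hexp.returnSum_lvl_zero_left_le_mul_returnSum hc n (hfin hE))
    hAI hBI (fun k => hsub (hs k)) (fun k => hsub (ht k)) hAs hBt
    fun k => hexp.tendsto_inv_mul_returnSum_biUnion_lvl
      (fun d hd => RankOne.lt_h_of_mem_unitDesc (hs k hd))
      fun d hd => RankOne.lt_h_of_mem_unitDesc (ht k hd)
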